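/- Consider the Reward-Approximation loss of the softmax-parametrized policy, L(θ) = Σ_{x∈X} 𝒟(x) · Σ_{y∈Y} π_θ(y|x)·(r_θ(x,y) − r(x,y))², where r_θ(x,y) = (1/τ)·log(Z(x)·π_θ(y|x)) and Z(x) = Σ_{y'∈Y} exp(τ·r(x,y')). Let ε₁ ≥ 0 and suppose θ satisfies |r_θ(x,y) − r(x,y)| ≤ ε₁ for all x ∈ X and y ∈ Y. Then the second derivative of L at θ satisfies |D²L(θ)(z,z)| ≤ (3·ε₁² + 18·ε₁/τ + 8/τ² + max{ε₁² + 2·ε₁/τ, 1/τ})·Σ_{x,y} z(x,y)² for every direction z : X × Y → ℝ. -/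

import Mathlib

/-- Exponential partition function along a line. -/
noncomputable def lineS {Y : Type*} [Fintype Y] (a z : Y → ℝ) (t : ℝ) : ℝ :=
  ∑ y, Real.exp (a y + t * z y)

/-- Softmax along a line. -/
noncomputable def lineP {Y : Type*} [Fintype Y] (a z : Y → ℝ) (t : ℝ) (y : Y) : ℝ :=
  Real.exp (a y + t * z y) / lineS a z t

/-- Mean of the direction under the softmax. -/
noncomputable def lineM {Y : Type*} [Fintype Y] (a z : Y → ℝ) (t : ℝ) : ℝ :=
  ∑ y, lineP a z t y * z y

/-- Reward residual along a line. -/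
noncomputable def lineE {Y : Type*} [Fintype Y] (a z q : Y → ℝ) (τ k : ℝ) (t : ℝ) (y : Y) : ℝ :=
  (1 / τ) * (k + (a y + t * z y) - Real.log (lineS a z t)) - q y

section
variable {Y : Type*} [Fintype Y] [Nonempty Y] (a z q : Y → ℝ) (τ k : ℝ)

lemma lineS_pos (t : ℝ) : 0 < lineS a z t :=
  Finset.sum_pos (fun _ _ => Real.exp_pos _) Finset.univ_nonempty

lemma lineP_pos (t : ℝ) (y : Y) : 0 < lineP a z t y :=
  div_pos (Real.exp_pos _) (lineS_pos a z t)

lemma lineP_sum (t : ℝ) : ∑ y, lineP a z t y = 1 := by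
  unfold lineP
  rw [← Finset.sum_div]
  exact div_self (lineS_pos a z t).ne'

lemma hasDerivAt_exp_line (t : ℝ) (y : Y) :
    HasDerivAt (fun t : ℝ => Real.exp (a y + t * z y)) (Real.exp (a y + t * z y) * z y) t := by
  have h : HasDerivAt (fun t : ℝ => a y + t * z y) (z y) t := by
    simpa using ((hasDerivAt_id t).mul_const (z y)).const_add (a y)
  exact h.exp

lemma hasDerivAt_lineS (t : ℝ) : HasDerivAt (lineS a z) (lineS a z t * lineM a z t) t := by
  have h : HasDerivAt (lineS a z) (∑ y, Real.exp (a y + t * z y) * z y) t := by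
    unfold lineS
    exact HasDerivAt.fun_sum (fun y _ => hasDerivAt_exp_line a z t y)
  convert h using 1
  unfold lineM lineP
  rw [Finset.mul_sum]
  refine Finset.sum_congr rfl fun y _ => ?_
  have := (lineS_pos a z t).ne'
  field_simp

lemma hasDerivAt_lineP (t : ℝ) (y : Y) :
    HasDerivAt (fun t => lineP a z t y) (lineP a z t y * (z y - lineM a z t)) t := by
  have hS := (lineS_pos a z t).ne'
  have h := (hasDerivAt_exp_line a z t y).div (hasDerivAt_lineS a z t) hS
  refine HasDerivAt.congr_deriv (f := fun t => lineP a z t y) h ?_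
  unfold lineP
  field_simp

lemma hasDerivAt_lineM (t : ℝ) :
    HasDerivAt (lineM a z) (∑ y, lineP a z t y * (z y - lineM a z t) * z y) t := by
  have := HasDerivAt.fun_sum (u := Finset.univ)
    (fun y _ => (hasDerivAt_lineP a z t y).mul_const (z y))
  exact this

lemma hasDerivAt_lineE (t : ℝ) (y : Y) :
    HasDerivAt (fun t => lineE a z q τ k t y) ((1 / τ) * (z y - lineM a z t)) t := by
  have hS := (lineS_pos a z t).ne'
  have h1 : HasDerivAt (fun t : ℝ => k + (a y + t * z y)) (z y) t := by
    simpa using (((hasDerivAt_id t).mul_const (z y)).const_add (a y)).const_add k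
  have h2 := (((h1.sub ((hasDerivAt_lineS a z t).log hS)).const_mul (1 / τ)).sub_const (q y))
  rw [mul_div_cancel_left₀ _ hS] at h2
  exact h2

/-- First derivative of the loss along a line. -/
noncomputable def lineF1 (t : ℝ) : ℝ :=
  ∑ y, lineP a z t y * (z y - lineM a z t) *
    (lineE a z q τ k t y ^ 2 + 2 / τ * lineE a z q τ k t y)

/-- Variance of the direction. -/
noncomputable def lineV (t : ℝ) : ℝ := ∑ y, lineP a z t y * (z y - lineM a z t) ^ 2

/-- Second derivative of the loss along a line. -/
noncomputable def lineF2 (t : ℝ) : ℝ :=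
  ∑ y, (lineP a z t y * (z y - lineM a z t) ^ 2 *
      (lineE a z q τ k t y ^ 2 + 4 / τ * lineE a z q τ k t y + 2 / τ ^ 2)
    - lineV a z t * (lineP a z t y *
      (lineE a z q τ k t y ^ 2 + 2 / τ * lineE a z q τ k t y)))

lemma lineV_eq (t : ℝ) : ∑ y, lineP a z t y * (z y - lineM a z t) * z y = lineV a z t := by
  have h0 : ∑ y, lineP a z t y * (z y - lineM a z t) = 0 := by
    simp only [mul_sub, Finset.sum_sub_distrib, ← Finset.sum_mul, lineP_sum, one_mul]
    exact sub_self _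
  have : lineV a z t = ∑ y, lineP a z t y * (z y - lineM a z t) * z y
      - (∑ y, lineP a z t y * (z y - lineM a z t)) * lineM a z t := by
    unfold lineV
    rw [Finset.sum_mul, ← Finset.sum_sub_distrib]
    exact Finset.sum_congr rfl fun y _ => by ring
  rw [this, h0]; ring

lemma lineV_nonneg (t : ℝ) : 0 ≤ lineV a z t :=
  Finset.sum_nonneg fun y _ => mul_nonneg (lineP_pos a z t y).le (sq_nonneg _)

lemma lineV_le (t : ℝ) : lineV a z t ≤ ∑ y, z y ^ 2 := by
  have h1 : lineV a z t = ∑ y, lineP a z t y * z y ^ 2 - lineM a z t ^ 2 := by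
    rw [← lineV_eq, sq (lineM a z t)]
    nth_rewrite 2 [lineM]
    rw [Finset.sum_mul, ← Finset.sum_sub_distrib]
    exact Finset.sum_congr rfl fun y _ => by ring
  have h2 : ∑ y, lineP a z t y * z y ^ 2 ≤ ∑ y, z y ^ 2 := by
    refine Finset.sum_le_sum fun y _ => ?_
    have : lineP a z t y ≤ 1 := by
      rw [← lineP_sum a z t]
      exact Finset.single_le_sum (f := fun y => lineP a z t y)
        (fun i _ => (lineP_pos a z t i).le) (Finset.mem_univ y)
    exact mul_le_of_le_one_left (sq_nonneg _) this
  nlinarith [sq_nonneg (lineM a z t)]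

lemma hasDerivAt_lineF (t : ℝ) :
    HasDerivAt (fun t => ∑ y, lineP a z t y * lineE a z q τ k t y ^ 2) (lineF1 a z q τ k t) t := by
  unfold lineF1
  refine HasDerivAt.fun_sum fun y _ => ?_
  refine ((hasDerivAt_lineP a z t y).fun_mul
    ((hasDerivAt_lineE a z q τ k t y).fun_pow 2)).congr_deriv ?_
  push_cast
  ring

lemma hasDerivAt_lineF1 (t : ℝ) :
    HasDerivAt (lineF1 a z q τ k) (lineF2 a z q τ k t) t := by
  unfold lineF1 lineF2
  refine HasDerivAt.fun_sum fun y _ => ?_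
  have hE := hasDerivAt_lineE a z q τ k t y
  have hM := hasDerivAt_lineM a z t
  rw [lineV_eq] at hM
  refine (((hasDerivAt_lineP a z t y).fun_mul (hM.const_sub (z y))).fun_mul
    ((hE.fun_pow 2).fun_add (hE.const_mul (2 / τ)))).congr_deriv ?_
  push_cast
  ring

lemma lineF2_bound (hτ : 0 < τ) (t ε : ℝ) (h : ∀ y, |lineE a z q τ k t y| ≤ ε) :
    |lineF2 a z q τ k t| ≤ (2 * ε ^ 2 + 6 * ε / τ + 2 / τ ^ 2) * lineV a z t := by
  have hV := lineV_nonneg a z t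
  have e : (2 * ε ^ 2 + 6 * ε / τ + 2 / τ ^ 2) * lineV a z t =
      ∑ y, (lineP a z t y * (z y - lineM a z t) ^ 2 * (ε ^ 2 + 4 / τ * ε + 2 / τ ^ 2)
        + lineV a z t * (lineP a z t y * (ε ^ 2 + 2 / τ * ε))) := by
    rw [Finset.sum_add_distrib, ← Finset.mul_sum, ← Finset.sum_mul, ← Finset.sum_mul, lineP_sum]
    change _ = lineV a z t * _ + _
    ring
  rw [e]
  unfold lineF2
  refine (Finset.abs_sum_le_sum_abs _ _).trans (Finset.sum_le_sum fun y _ => ?_)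
  have hp := (lineP_pos a z t y).le
  have hd := h y
  set d := lineE a z q τ k t y
  have hd2 : d ^ 2 ≤ ε ^ 2 := by rw [← sq_abs]; gcongr
  have A : |d ^ 2 + 4 / τ * d + 2 / τ ^ 2| ≤ ε ^ 2 + 4 / τ * ε + 2 / τ ^ 2 := by
    refine (abs_add_le _ _).trans (add_le_add ((abs_add_le _ _).trans (add_le_add ?_ ?_)) ?_)
    · rwa [abs_of_nonneg (sq_nonneg d)]
    · rw [abs_mul, abs_of_nonneg (by positivity : 0 ≤ 4 / τ)]; gcongr
    · rw [abs_of_nonneg (by positivity)]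
  have B : |d ^ 2 + 2 / τ * d| ≤ ε ^ 2 + 2 / τ * ε := by
    refine (abs_add_le _ _).trans (add_le_add ?_ ?_)
    · rwa [abs_of_nonneg (sq_nonneg d)]
    · rw [abs_mul, abs_of_nonneg (by positivity : 0 ≤ 2 / τ)]; gcongr
  refine (abs_sub _ _).trans (add_le_add ?_ ?_)
  · rw [abs_mul, abs_of_nonneg (by positivity : 0 ≤ lineP a z t y * (z y - lineM a z t) ^ 2)]
    gcongr
  · rw [abs_mul, abs_mul, abs_of_nonneg hV, abs_of_nonneg hp]
    gcongr

end

/-- Second Frechet derivative on the diagonal from derivatives along the line. -/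
lemma fderiv2_line {E : Type*} [NormedAddCommGroup E] [NormedSpace ℝ E] (L : E → ℝ)
    (hL : ContDiff ℝ 2 L) (θ z : E) (g1 : ℝ → ℝ) (c : ℝ)
    (h1 : ∀ t, HasDerivAt (fun t : ℝ => L (θ + t • z)) (g1 t) t)
    (h2 : HasDerivAt g1 c 0) : fderiv ℝ (fderiv ℝ L) θ z z = c := by
  have hl : ∀ t : ℝ, HasDerivAt (fun t : ℝ => θ + t • z) z t := fun t => by
    simpa using ((hasDerivAt_id t).smul_const z).const_add θ
  have hd : Differentiable ℝ L := hL.differentiable (by norm_num)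
  have hd2 : Differentiable ℝ (fderiv ℝ L) :=
    (hL.fderiv_right (m := 1) (by norm_num)).differentiable (by norm_num)
  have e : g1 = fun t => fderiv ℝ L (θ + t • z) z := by
    funext t
    exact (h1 t).unique ((hd _).hasFDerivAt.comp_hasDerivAt t (hl t))
  have h3 : HasDerivAt (fun t : ℝ => fderiv ℝ L (θ + t • z))
      (fderiv ℝ (fderiv ℝ L) (θ + (0 : ℝ) • z) z) 0 :=
    (hd2 (θ + (0 : ℝ) • z)).hasFDerivAt.comp_hasDerivAt (0 : ℝ) (hl 0)
  have h4 := ((ContinuousLinearMap.apply ℝ ℝ z).hasFDerivAt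
    (x := fderiv ℝ L (θ + (0 : ℝ) • z))).comp_hasDerivAt (0 : ℝ) h3
  rw [e] at h2
  have h5 := h4.unique h2
  rw [zero_smul, add_zero] at h5
  exact h5

/-- The Reward-Approximation loss of the softmax-parametrized policy
satisfies, at every θ with |r_θ(x,y) − r(x,y)| ≤ ε₁ for all x, y, the
second-derivative bound
|D²L(θ)(z,z)| ≤ (3ε₁² + 18ε₁/τ + 8/τ² + max{ε₁² + 2ε₁/τ, 1/τ})·Σ_{x,y} z(x,y)². -/
theorem reward_approximation_loss_smooth
    {X Y : Type*} [Fintype X] [Fintype Y] [Nonempty X] [Nonempty Y]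
    (r : X → Y → ℝ) (τ : ℝ) (hτ : 0 < τ)
    (D : X → ℝ) (hD0 : ∀ x, 0 ≤ D x) (hD1 : ∑ x : X, D x = 1)
    (Z : X → ℝ) (hZ : ∀ x, Z x = ∑ y' : Y, Real.exp (τ * r x y'))
    (πθ : (X × Y → ℝ) → X → Y → ℝ)
    (hπθ : ∀ θ x y, πθ θ x y = Real.exp (θ (x, y)) / ∑ y' : Y, Real.exp (θ (x, y')))
    (rθ : (X × Y → ℝ) → X → Y → ℝ)
    (hrθ : ∀ θ x y, rθ θ x y = (1 / τ) * Real.log (Z x * πθ θ x y))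
    (L : (X × Y → ℝ) → ℝ)
    (hL : ∀ θ, L θ = ∑ x : X, D x * ∑ y : Y,
      πθ θ x y * (rθ θ x y - r x y) ^ 2)
    (ε₁ : ℝ) (hε₁ : 0 ≤ ε₁)
    (θ : X × Y → ℝ)
    (hθ : ∀ x y, |rθ θ x y - r x y| ≤ ε₁) :
    ∀ z : X × Y → ℝ,
      |fderiv ℝ (fderiv ℝ L) θ z z| ≤
        (3 * ε₁ ^ 2 + 18 * ε₁ / τ + 8 / τ ^ 2 +
          max (ε₁ ^ 2 + 2 * ε₁ / τ) (1 / τ)) * ∑ p : X × Y, z p ^ 2 := by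
  intro z
  have hS : ∀ (θ : X × Y → ℝ) x, 0 < ∑ y' : Y, Real.exp (θ (x, y')) := fun θ x =>
    Finset.sum_pos (fun _ _ => Real.exp_pos _) Finset.univ_nonempty
  have hZp : ∀ x, 0 < Z x := fun x => by
    rw [hZ]; exact Finset.sum_pos (fun _ _ => Real.exp_pos _) Finset.univ_nonempty
  have hr' : ∀ θ x y, rθ θ x y = (1 / τ) * (Real.log (Z x) + θ (x, y)
      - Real.log (∑ y' : Y, Real.exp (θ (x, y')))) := fun θ x y => by
    rw [hrθ, hπθ, Real.log_mul (hZp x).ne' (div_pos (Real.exp_pos _) (hS θ x)).ne',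
      Real.log_div (Real.exp_pos _).ne' (hS θ x).ne', Real.log_exp]
    ring
  have hLC : ContDiff ℝ 2 L := by
    have : L = fun θ => ∑ x : X, D x * ∑ y : Y,
        (Real.exp (θ (x, y)) / ∑ y' : Y, Real.exp (θ (x, y'))) *
        ((1 / τ) * (Real.log (Z x) + θ (x, y)
          - Real.log (∑ y' : Y, Real.exp (θ (x, y')))) - r x y) ^ 2 := by
      funext θ
      simp only [hL, hr', hπθ]
    rw [this]
    have hSc : ∀ x : X, ContDiff ℝ 2 (fun θ : X × Y → ℝ => ∑ y' : Y, Real.exp (θ (x, y'))) :=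
      fun x => by fun_prop
    refine ContDiff.sum fun x _ => contDiff_const.mul (ContDiff.sum fun y _ => ?_)
    refine ContDiff.mul (ContDiff.div (by fun_prop) (hSc x) fun θ => (hS θ x).ne') ?_
    have hlog := (hSc x).log fun θ => (hS θ x).ne'
    refine ContDiff.pow (ContDiff.sub (contDiff_const.mul (ContDiff.sub ?_ hlog)) contDiff_const) 2
    fun_prop
  let a : X → Y → ℝ := fun x y => θ (x, y)
  let w : X → Y → ℝ := fun x y => z (x, y)
  have hLl : (fun t : ℝ => L (θ + t • z)) = fun t => ∑ x, D x * ∑ y,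
      lineP (a x) (w x) t y * lineE (a x) (w x) (r x) τ (Real.log (Z x)) t y ^ 2 := by
    funext t
    simp only [hL, hr', hπθ]
    rfl
  have key := fderiv2_line L hLC θ z
    (fun t => ∑ x, D x * lineF1 (a x) (w x) (r x) τ (Real.log (Z x)) t)
    (∑ x, D x * lineF2 (a x) (w x) (r x) τ (Real.log (Z x)) 0)
    (fun t => by
      rw [hLl]
      exact HasDerivAt.fun_sum fun x _ => (hasDerivAt_lineF _ _ _ _ _ t).const_mul (D x))
    (HasDerivAt.fun_sum fun x _ => (hasDerivAt_lineF1 _ _ _ _ _ 0).const_mul (D x))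
  rw [key, Fintype.sum_prod_type, Finset.mul_sum]
  refine (Finset.abs_sum_le_sum_abs _ _).trans (Finset.sum_le_sum fun x _ => ?_)
  have hDx : D x ≤ 1 := by
    rw [← hD1]; exact Finset.single_le_sum (fun i _ => hD0 i) (Finset.mem_univ x)
  have hb := lineF2_bound (a x) (w x) (r x) τ (Real.log (Z x)) hτ 0 ε₁ (fun y => by
    have := hθ x y
    rw [hr'] at this
    simpa [lineE, lineS, a] using this)
  have hV := lineV_le (a x) (w x) 0
  have hV0 := lineV_nonneg (a x) (w x) 0
  have hmax : 0 ≤ max (ε₁ ^ 2 + 2 * ε₁ / τ) (1 / τ) := le_max_of_le_right (by positivity)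
  rw [abs_mul, abs_of_nonneg (hD0 x)]
  calc D x * |lineF2 (a x) (w x) (r x) τ (Real.log (Z x)) 0|
      ≤ |lineF2 (a x) (w x) (r x) τ (Real.log (Z x)) 0| :=
        mul_le_of_le_one_left (abs_nonneg _) hDx
    _ ≤ _ := hb
    _ ≤ _ := by
      refine mul_le_mul ?_ hV hV0 (by positivity)
      have e1 : 6 * ε₁ / τ ≤ 18 * ε₁ / τ := by gcongr; norm_num
      have e2 : 2 / τ ^ 2 ≤ 8 / τ ^ 2 := by gcongr; norm_num
      nlinarith [sq_nonneg ε₁]
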